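/- There exists a universal constant C > 0 such that the following holds. Let V be a finite set with |V| = n ≥ 2, A ⊆ V × V a set of arcs, s, t ∈ V distinct, and U a finite set of scenarios with |U| = K ≥ 3, each scenario ξ assigning a nonnegative cost c^ξ_e to every arc e ∈ A. Suppose x : A → [0,1] satisfies the s–t flow constraints (value-1 flow from s to t with conservation at intermediate nodes), the set of arcs with x_e > 0 contains no directed cycle, and for some L > 0, Σ_{e∈A} c^ξ_e x_e ≤ L for every ξ ∈ U and c^ξ_e ≤ L for every ξ ∈ U and every arc e with x_e > 0. Then for every real number l̂ ≥ 1 there exists a directed path P from s to t, all of whose arcs e satisfy x_e > 0, such that Σ_{e∈P} c^ξ_e ≤ C · ((n · ln K)/(l̂ · ln ln K) + l̂) · L for every ξ ∈ U. -/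

import Mathlib

/-- `IsDipath A s t p` : the list of vertices `p` is a directed path from `s`
to `t` whose consecutive pairs are arcs of `A`, with all vertices distinct. -/
def IsDipath {V : Type} (A : Finset (V × V)) (s t : V) (p : List V) : Prop :=
  p.Nodup ∧ p.head? = some s ∧ p.getLast? = some t ∧
    p.Chain' (fun u v => (u, v) ∈ A)

/-!
The flow defines a random walk that leaves `v` along `e` with probability `x e / outflow v`, and the
expected total of any arc cost `g` along this walk is `∑ x e * g e`. Call a vertex light if its
outflow is below `θ = l̂ / n`. The walk visits at most `n θ = l̂` light vertices in expectation.
At a heavy vertex `v` the mean cost of the next arc is at most `θ⁻¹` times the cost of the flow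
through `v`; since an acyclic walk visits each vertex at most once, the mean costs along any walk
add up to at most `1 / θ = n / l̂` in every scenario (normalising `L = 1`), and a Chernoff bound
with parameter `ln ln K` controls the heavy cost in all `K` scenarios at once. The method of
conditional expectations finds a single path along which the number of light vertices and the sum
of the `K` exponential moments are both at most twice their estimates. When `n < l̂` the number of
arcs of a path already suffices.
-/

open Finset Relation

/-- The relation of being joined by an arc of `A`. -/
abbrev Arc {V : Type*} (A : Finset (V × V)) (v w : V) : Prop := (v, w) ∈ A

/-- Absence of directed cycles, encoded as well-foundedness of the reversed arcs so that
functions on vertices can be defined by recursion on out-neighbours. -/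
abbrev IsAcyclic {V : Type*} (A : Finset (V × V)) : Prop := WellFounded fun w v => Arc A v w

/-- The total value of `x` on the arcs leaving `v`. -/
def outflow {V : Type*} [DecidableEq V] (A : Finset (V × V)) (x : V × V → ℝ) (v : V) : ℝ :=
  ∑ e ∈ A with e.1 = v, x e

/-- The total value of `x` on the arcs entering `v`. -/
def inflow {V : Type*} [DecidableEq V] (A : Finset (V × V)) (x : V × V → ℝ) (v : V) : ℝ :=
  ∑ e ∈ A with e.2 = v, x e

/-- The flow constraints for a flow of value one from `s` to `t`; the sign of `x` is not part of
the notion. -/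
structure IsUnitFlow {V : Type*} [DecidableEq V] (A : Finset (V × V)) (x : V × V → ℝ)
    (s t : V) : Prop where
  outflow_source : outflow A x s = 1
  inflow_sink : inflow A x t = 1
  conservation : ∀ v, v ≠ s → v ≠ t → outflow A x v = inflow A x v

/-- The sum of the arc costs `f` along the walk with vertex list `p`. -/
def pathCost {V : Type*} (f : V × V → ℝ) (p : List V) : ℝ := ((p.zip p.tail).map f).sum

section Walk

variable {V : Type*} {A : Finset (V × V)}

lemma pathCost_singleton (f : V × V → ℝ) (v : V) : pathCost f [v] = 0 := by
  simp [pathCost]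

lemma pathCost_cons_cons (f : V × V → ℝ) (v w : V) (p : List V) :
    pathCost f (v :: w :: p) = f (v, w) + pathCost f (w :: p) := by
  simp [pathCost]

lemma mem_of_mem_zip_tail {p : List V} (hp : p.IsChain (Arc A)) :
    ∀ e ∈ p.zip p.tail, e ∈ A := by
  induction p using List.twoStepInduction with
  | nil => simp
  | singleton => simp
  | cons_cons v w p _ ih =>
    rw [List.isChain_cons_cons] at hp
    simpa only [List.tail_cons, List.zip_cons_cons, List.forall_mem_cons]
      using ⟨hp.1, ih w hp.2⟩

lemma pathCost_le_pathCost_add_pathCost {f g h : V × V → ℝ} {p : List V}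
    (hp : p.IsChain (Arc A)) (hfgh : ∀ e ∈ A, f e ≤ g e + h e) :
    pathCost f p ≤ pathCost g p + pathCost h p := by
  simp only [pathCost, ← List.sum_map_add]
  exact List.sum_le_sum fun e he => hfgh e (mem_of_mem_zip_tail hp e he)

lemma pathCost_nonneg {f : V × V → ℝ} {p : List V} (hp : p.IsChain (Arc A))
    (hf : ∀ e ∈ A, 0 ≤ f e) : 0 ≤ pathCost f p :=
  List.sum_nonneg <| List.forall_mem_map.2 fun e he => hf e (mem_of_mem_zip_tail hp e he)

lemma pathCost_div (f : V × V → ℝ) (L : ℝ) (p : List V) :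
    pathCost (fun e => f e / L) p = pathCost f p / L := by
  simp only [pathCost, div_eq_mul_inv, List.sum_map_mul_right]

lemma pathCost_le_card [Fintype V] {f : V × V → ℝ} {p : List V} (hp : p.IsChain (Arc A))
    (hnodup : p.Nodup) (hf : ∀ e ∈ A, f e ≤ 1) : pathCost f p ≤ Fintype.card V := by
  have hlen : (p.zip p.tail).length ≤ Fintype.card V := by
    rw [List.length_zip]
    exact (min_le_left _ _).trans hnodup.length_le_card
  calc pathCost f p ≤ ((p.zip p.tail).map f).length • (1 : ℝ) :=
        List.sum_le_card_nsmul _ _ <| List.forall_mem_map.2 fun e he =>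
          hf e (mem_of_mem_zip_tail hp e he)
    _ ≤ Fintype.card V := by simpa using hlen

lemma isAcyclic_of_no_directed_cycle [Finite V]
    (hA : ∀ p : List V, p ≠ [] → ¬ ∀ e ∈ p.zip (p.rotate 1), e ∈ A) : IsAcyclic A := by
  have irrefl (v : V) : ¬ TransGen (Arc A) v v := by
    intro hv
    obtain ⟨u, hvu, huv⟩ := TransGen.tail'_iff.1 hv
    obtain ⟨p, hp, rfl⟩ := List.exists_isChain_cons_of_relationReflTransGen hvu
    have closed : (v :: p ++ [v]).IsChain (Arc A) :=
      hp.append (.singleton v) (by simpa [List.getLast?_eq_getLast_of_ne_nil] using huv)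
    have arcs := List.isChain_cons_append_singleton_iff_forall₂.1 closed
    refine hA (v :: p) (List.cons_ne_nil v p) fun e he => ?_
    exact (List.forall₂_iff_zip.1 arcs).2 (by simpa using he)
  have : IsTrans V fun w v => TransGen (Arc A) v w := ⟨fun _ _ _ h₁ h₂ => h₂.trans h₁⟩
  have : Std.Irrefl fun w v => TransGen (Arc A) v w := ⟨irrefl⟩
  exact Subrelation.wf TransGen.single
    (Finite.wellFounded_of_trans_of_irrefl fun w v => TransGen (Arc A) v w)

namespace IsAcyclic

lemma not_transGen (hA : IsAcyclic A) (v : V) : ¬ TransGen (Arc A) v v :=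
  fun hv => hA.transGen.irrefl.irrefl v (transGen_swap.2 hv)

lemma nodup_of_isChain (hA : IsAcyclic A) {p : List V} (hp : p.IsChain (Arc A)) : p.Nodup := by
  have hpw := List.isChain_iff_pairwise.1 (hp.imp fun _ _ => TransGen.single)
  refine hpw.imp ?_
  rintro v _ hv rfl
  exact hA.not_transGen v hv

lemma exists_potential [Fintype V] (hA : IsAcyclic A) {B : V → ℝ} (hB : ∀ v, 0 ≤ B v) :
    ∃ β : V → ℝ, (∀ v, 0 ≤ β v) ∧ (∀ v, β v ≤ ∑ u, B u) ∧
      ∀ e ∈ A, B e.1 + β e.2 ≤ β e.1 := by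
  classical
  let descendants (v : V) : Finset V := {u | ReflTransGen (Arc A) v u}
  refine ⟨fun v => ∑ u ∈ descendants v, B u, fun v => sum_nonneg fun u _ => hB u,
    fun v => sum_le_univ_sum_of_nonneg hB, ?_⟩
  rintro ⟨v, w⟩ hvw
  have hv : v ∉ descendants w := fun hwv =>
    hA.not_transGen v (.head' hvw (mem_filter.1 hwv).2)
  have hsub : insert v (descendants w) ⊆ descendants v := by
    refine insert_subset (by simp [descendants, ReflTransGen.refl]) fun u hu => ?_
    exact mem_filter.2 ⟨mem_univ u, .head hvw (mem_filter.1 hu).2⟩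
  calc B v + ∑ u ∈ descendants w, B u = ∑ u ∈ insert v (descendants w), B u :=
        (sum_insert hv).symm
    _ ≤ ∑ u ∈ descendants v, B u := sum_le_sum_of_subset_of_nonneg hsub fun u _ _ => hB u

end IsAcyclic
end Walk

section Flow

variable {V : Type*} [DecidableEq V] {A : Finset (V × V)} {x : V × V → ℝ} {s t : V}

lemma sum_outflow_mul [Fintype V] (A : Finset (V × V)) (x : V × V → ℝ) (f : V → ℝ) :
    ∑ v, outflow A x v * f v = ∑ e ∈ A, x e * f e.1 := by
  simp only [outflow, sum_mul]
  rw [← sum_fiberwise A Prod.fst]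
  exact sum_congr rfl fun v _ => sum_congr rfl fun e he => by rw [(mem_filter.1 he).2]

lemma sum_inflow_mul [Fintype V] (A : Finset (V × V)) (x : V × V → ℝ) (f : V → ℝ) :
    ∑ v, inflow A x v * f v = ∑ e ∈ A, x e * f e.2 := by
  simp only [inflow, sum_mul]
  rw [← sum_fiberwise A Prod.snd]
  exact sum_congr rfl fun v _ => sum_congr rfl fun e he => by rw [(mem_filter.1 he).2]

lemma outflow_eq_zero {v : V} (hv : ∀ e ∈ A, e.1 ≠ v) : outflow A x v = 0 := by
  rw [outflow, filter_eq_empty_iff.2 fun {e} he => hv e he, sum_empty]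

lemma outflow_pos (hx : ∀ e ∈ A, 0 < x e) {e : V × V} (he : e ∈ A) : 0 < outflow A x e.1 :=
  sum_pos (fun a ha => hx a (mem_filter.1 ha).1) ⟨e, mem_filter.2 ⟨he, rfl⟩⟩

lemma inflow_pos (hx : ∀ e ∈ A, 0 < x e) {e : V × V} (he : e ∈ A) : 0 < inflow A x e.2 :=
  sum_pos (fun a ha => hx a (mem_filter.1 ha).1) ⟨e, mem_filter.2 ⟨he, rfl⟩⟩

namespace IsUnitFlow

lemma filter_pos (hflow : IsUnitFlow A x s t) (hx : ∀ e ∈ A, 0 ≤ x e) :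
    IsUnitFlow {e ∈ A | 0 < x e} x s t := by
  have restrict (P : V × V → Prop) [DecidablePred P] :
      ∑ e ∈ {e ∈ A | 0 < x e} with P e, x e = ∑ e ∈ A with P e, x e := by
    rw [filter_comm]
    exact sum_filter_of_ne fun e he hne => (hx e (mem_filter.1 he).1).lt_of_ne' hne
  constructor <;> simp only [outflow, inflow, restrict]
  exacts [hflow.outflow_source, hflow.inflow_sink, hflow.conservation]

lemma eq_sink (hflow : IsUnitFlow A x s t) (hx : ∀ e ∈ A, 0 < x e) {v : V}
    (hin : v = s ∨ ∃ u, Arc A u v) (hout : ∀ e ∈ A, e.1 ≠ v) : v = t := by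
  by_contra hvt
  have hzero : outflow A x v = 0 := outflow_eq_zero hout
  by_cases hvs : v = s
  · exact one_ne_zero (hflow.outflow_source.symm.trans (hvs ▸ hzero))
  · obtain ⟨u, huv⟩ := hin.resolve_left hvs
    exact (inflow_pos hx huv).ne' (hflow.conservation v hvs hvt ▸ hzero)

lemma eq_sink_of_isChain (hflow : IsUnitFlow A x s t) (hx : ∀ e ∈ A, 0 < x e) {p : List V} {w : V}
    (hp : (s :: p).IsChain (Arc A)) (hlast : (s :: p).getLast? = some w)
    (hout : ∀ e ∈ A, e.1 ≠ w) : w = t := by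
  have hsw := List.relationReflTransGen_of_exists_isChain_cons p hp
    (List.getLast_of_getLast?_eq_some hlast)
  obtain hws | ⟨u, -, huw⟩ := hsw.cases_tail
  exacts [hflow.eq_sink hx (.inl hws) hout, hflow.eq_sink hx (.inr ⟨u, huw⟩) hout]

lemma fst_ne_sink (hflow : IsUnitFlow A x s t) (hx : ∀ e ∈ A, 0 < x e) (hA : IsAcyclic A) :
    ∀ e ∈ A, e.1 ≠ t := by
  rintro ⟨_, u⟩ hu rfl
  obtain ⟨m, hm, hmin⟩ := hA.has_min {w | TransGen (Arc A) _ w} ⟨u, .single hu⟩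
  obtain ⟨r, -, hrm⟩ := TransGen.tail'_iff.1 hm
  have hmt := hflow.eq_sink hx (.inr ⟨r, hrm⟩) <| by
    rintro ⟨_, w⟩ hw rfl
    exact hmin w (hm.tail hw) hw
  exact hA.not_transGen m (hmt ▸ hm)

lemma sum_mul_sub [Finite V] (hflow : IsUnitFlow A x s t) (hx : ∀ e ∈ A, 0 < x e) (hA : IsAcyclic A)
    (hst : s ≠ t) (f : V → ℝ) : ∑ e ∈ A, x e * (f e.1 - f e.2) = f s - f t := by
  have := Fintype.ofFinite V
  have hout_sink : outflow A x t = 0 := outflow_eq_zero (hflow.fst_ne_sink hx hA)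
  have balance (f : V → ℝ) :
      ∑ e ∈ A, x e * (f e.1 - f e.2) = (1 - inflow A x s) * f s - f t := by
    simp only [mul_sub, sum_sub_distrib, ← sum_outflow_mul, ← sum_inflow_mul]
    rw [← sum_sub_distrib, Fintype.sum_eq_add s t hst]
    · rw [hflow.outflow_source, hflow.inflow_sink, hout_sink]
      ring
    · rintro v ⟨hvs, hvt⟩
      rw [hflow.conservation v hvs hvt, sub_self]
  have hin_source : inflow A x s = 0 := by
    have hone := balance 1
    simp only [Pi.one_apply, sub_self, mul_zero, sum_const_zero, mul_one] at hone
    linarith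
  rw [balance, hin_source, sub_zero, one_mul]

end IsUnitFlow

lemma exists_expectedCost (hA : IsAcyclic A) (hx : ∀ e ∈ A, 0 < x e) (g : V × V → ℝ) :
    ∃ N : V → ℝ, (∀ v, outflow A x v = 0 → N v = 0) ∧
      ∀ v, ∑ e ∈ A with e.1 = v, x e * (g e + N e.2) = outflow A x v * N v := by
  classical
  let step (v : V) (N : ∀ w, Arc A v w → ℝ) : ℝ :=
    (∑ e ∈ A with e.1 = v, x e * (g e + if h : Arc A v e.2 then N e.2 h else 0)) / outflow A x v
  have hN (v : V) : hA.fix step v =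
      (∑ e ∈ A with e.1 = v, x e * (g e + hA.fix step e.2)) / outflow A x v := by
    rw [hA.fix_eq]
    refine congrArg (· / _) <| sum_congr rfl fun e he => ?_
    obtain ⟨heA, rfl⟩ := mem_filter.1 he
    rw [dif_pos heA]
  refine ⟨hA.fix step, fun v hv => by rw [hN, hv, div_zero], fun v => ?_⟩
  rcases (A.filter (·.1 = v)).eq_empty_or_nonempty with hempty | ⟨e, he⟩
  · simp [outflow, hempty]
  · obtain ⟨heA, rfl⟩ := mem_filter.1 he
    rw [hN e.1, mul_div_cancel₀ _ (outflow_pos hx heA).ne']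

lemma IsUnitFlow.eq_sum_of_expectedCost [Finite V] (hflow : IsUnitFlow A x s t)
    (hx : ∀ e ∈ A, 0 < x e) (hA : IsAcyclic A) (hst : s ≠ t) {g : V × V → ℝ} {N : V → ℝ}
    (hN : ∀ v, ∑ e ∈ A with e.1 = v, x e * (g e + N e.2) = outflow A x v * N v) :
    N s - N t = ∑ e ∈ A, x e * g e := by
  have := Fintype.ofFinite V
  have htotal : ∑ e ∈ A, x e * (g e + N e.2) = ∑ e ∈ A, x e * N e.1 := by
    rw [← sum_outflow_mul, ← sum_fiberwise A Prod.fst]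
    exact sum_congr rfl fun v _ => hN v
  rw [← hflow.sum_mul_sub hx hA hst N]
  simp only [mul_add, mul_sub, sum_add_distrib, sum_sub_distrib] at htotal ⊢
  linarith

/-- The mean of the arc cost `h` over the next arc of the random walk that leaves `v` along `e` with
probability `x e / outflow A x v`; it is `0` when no flow leaves `v`. -/
noncomputable def meanCost (A : Finset (V × V)) (x h : V × V → ℝ) (v : V) : ℝ :=
  (∑ e ∈ A with e.1 = v, x e * h e) / outflow A x v

lemma sum_meanCost [Fintype V] (A : Finset (V × V)) (x h : V × V → ℝ) :
    ∑ v, meanCost A x h v = ∑ e ∈ A, x e * h e / outflow A x e.1 := by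
  simp only [meanCost, sum_div]
  rw [← sum_fiberwise A Prod.fst]
  exact sum_congr rfl fun v _ => sum_congr rfl fun e he => by rw [(mem_filter.1 he).2]

lemma meanCost_nonneg (hx : ∀ e ∈ A, 0 < x e) {h : V × V → ℝ} (hh : ∀ e ∈ A, 0 ≤ h e) (v : V) :
    0 ≤ meanCost A x h v :=
  div_nonneg
    (sum_nonneg fun e he => mul_nonneg (hx e (mem_filter.1 he).1).le (hh e (mem_filter.1 he).1))
    (sum_nonneg fun e he => (hx e (mem_filter.1 he).1).le)

lemma exp_mul_le_one_add (l : ℝ) {y : ℝ} (hy : y ∈ Set.Icc (0 : ℝ) 1) :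
    Real.exp (l * y) ≤ 1 + (Real.exp l - 1) * y := by
  have chord :=
    convexOn_exp.2 (Set.mem_univ 0) (Set.mem_univ l) (sub_nonneg.2 hy.2) hy.1 (sub_add_cancel 1 y)
  simp only [smul_eq_mul, mul_zero, zero_add, Real.exp_zero] at chord
  rw [mul_comm l y]
  linarith

lemma sum_mul_exp_le (hx : ∀ e ∈ A, 0 < x e) {h : V × V → ℝ}
    (hh : ∀ e ∈ A, h e ∈ Set.Icc 0 1) (l : ℝ) (v : V) :
    ∑ e ∈ A with e.1 = v, x e * Real.exp (l * h e) ≤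
      outflow A x v * Real.exp ((Real.exp l - 1) * meanCost A x h v) := by
  rcases (A.filter (·.1 = v)).eq_empty_or_nonempty with hempty | ⟨a, ha⟩
  · simp [outflow, hempty]
  · obtain ⟨haA, rfl⟩ := mem_filter.1 ha
    have hpos := outflow_pos hx haA
    calc ∑ e ∈ A with e.1 = a.1, x e * Real.exp (l * h e)
        ≤ ∑ e ∈ A with e.1 = a.1, x e * (1 + (Real.exp l - 1) * h e) := by
          refine sum_le_sum fun e he => ?_
          have heA := (mem_filter.1 he).1
          exact mul_le_mul_of_nonneg_left (exp_mul_le_one_add l (hh e heA)) (hx e heA).le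
      _ = outflow A x a.1 + (Real.exp l - 1) * ∑ e ∈ A with e.1 = a.1, x e * h e := by
          rw [outflow, mul_sum, ← sum_add_distrib]
          exact sum_congr rfl fun e _ => by ring
      _ = outflow A x a.1 * ((Real.exp l - 1) * meanCost A x h a.1 + 1) := by
          rw [meanCost]
          field_simp
          ring
      _ ≤ outflow A x a.1 * Real.exp ((Real.exp l - 1) * meanCost A x h a.1) := by
          gcongr
          exact Real.add_one_le_exp _

lemma IsAcyclic.exists_exp_potential [Fintype V] (hA : IsAcyclic A) (hx : ∀ e ∈ A, 0 < x e)
    {h : V × V → ℝ} (hh : ∀ e ∈ A, h e ∈ Set.Icc 0 1) {l : ℝ} (hl : 0 ≤ l) :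
    ∃ G : V → ℝ, (∀ v, 1 ≤ G v) ∧
      (∀ v, G v ≤ Real.exp ((Real.exp l - 1) * ∑ u, meanCost A x h u)) ∧
      ∀ v, ∑ e ∈ A with e.1 = v, x e * (Real.exp (l * h e) * G e.2) ≤ outflow A x v * G v := by
  have hl' : 0 ≤ Real.exp l - 1 := sub_nonneg.2 (Real.one_le_exp hl)
  obtain ⟨β, hβ₀, hβ_le, hβ⟩ :=
    hA.exists_potential fun v => mul_nonneg hl' (meanCost_nonneg hx (fun e he => (hh e he).1) v)
  refine ⟨fun v => Real.exp (β v), fun v => Real.one_le_exp (hβ₀ v), fun v => ?_, fun v => ?_⟩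
  · rw [mul_sum]
    exact Real.exp_le_exp.2 (hβ_le v)
  set B := (Real.exp l - 1) * meanCost A x h v
  calc ∑ e ∈ A with e.1 = v, x e * (Real.exp (l * h e) * Real.exp (β e.2))
      ≤ ∑ e ∈ A with e.1 = v, x e * Real.exp (l * h e) * Real.exp (β v - B) := by
        refine sum_le_sum fun e he => ?_
        obtain ⟨heA, rfl⟩ := mem_filter.1 he
        rw [← mul_assoc]
        have := (hx e heA).le
        gcongr
        linarith [hβ e heA]
    _ ≤ outflow A x v * Real.exp B * Real.exp (β v - B) := by
        rw [← sum_mul]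
        gcongr
        exact sum_mul_exp_le hx hh l v
    _ = outflow A x v * Real.exp (β v) := by
        rw [mul_assoc, ← Real.exp_add, add_sub_cancel]

/- In the induction the weights `W ξ` accumulate the exponentials of the costs already incurred. -/
lemma exists_walk_potential_le {U : Type*} [Fintype U] (hA : IsAcyclic A)
    (hx : ∀ e ∈ A, 0 < x e) {g : V × V → ℝ} {h : U → V × V → ℝ} {l : ℝ}
    {N : V → ℝ} {G : U → V → ℝ}
    (hN₀ : ∀ v, outflow A x v = 0 → N v = 0)
    (hN : ∀ v, ∑ e ∈ A with e.1 = v, x e * (g e + N e.2) = outflow A x v * N v)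
    (hG₁ : ∀ ξ v, 1 ≤ G ξ v)
    (hG : ∀ ξ v, ∑ e ∈ A with e.1 = v, x e * (Real.exp (l * h ξ e) * G ξ e.2) ≤
      outflow A x v * G ξ v)
    (v : V) {W : U → ℝ} (hW : ∀ ξ, 0 ≤ W ξ) :
    ∃ (p : List V) (w : V), (v :: p).IsChain (Arc A) ∧ (v :: p).getLast? = some w ∧
      (∀ e ∈ A, e.1 ≠ w) ∧
      ∑ ξ, W ξ * Real.exp (l * pathCost (h ξ) (v :: p)) + pathCost g (v :: p) ≤
        ∑ ξ, W ξ * G ξ v + N v := by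
  induction v using hA.induction generalizing W with
  | _ v ih =>
  rcases (A.filter (·.1 = v)).eq_empty_or_nonempty with hempty | hne
  · have hsink (e : V × V) (he : e ∈ A) : e.1 ≠ v := filter_eq_empty_iff.1 hempty he
    refine ⟨[], v, .singleton v, rfl, hsink, ?_⟩
    simp only [pathCost_singleton, mul_zero, Real.exp_zero, hN₀ v (outflow_eq_zero hsink)]
    gcongr with ξ
    exacts [hW ξ, hG₁ ξ v]
  · have average : ∑ e ∈ A with e.1 = v,
        x e * (∑ ξ, W ξ * Real.exp (l * h ξ e) * G ξ e.2 + (g e + N e.2)) ≤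
          ∑ e ∈ A with e.1 = v, x e * (∑ ξ, W ξ * G ξ v + N v) := by
      calc _ = ∑ ξ, W ξ * ∑ e ∈ A with e.1 = v, x e * (Real.exp (l * h ξ e) * G ξ e.2) +
            ∑ e ∈ A with e.1 = v, x e * (g e + N e.2) := by
            simp only [mul_add (x _) (∑ _, _), sum_add_distrib, mul_sum]
            rw [sum_comm]
            congr! 3
            ring
        _ ≤ ∑ ξ, W ξ * (outflow A x v * G ξ v) + outflow A x v * N v := by
            rw [hN]
            gcongr with ξ
            exacts [hW ξ, hG ξ v]
        _ = _ := by
            rw [← sum_mul, mul_add, mul_sum]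
            simp only [mul_left_comm, outflow]
    obtain ⟨e, he, hle⟩ := exists_le_of_sum_le hne average
    obtain ⟨heA, rfl⟩ := mem_filter.1 he
    obtain ⟨p, w, hchain, hlast, hsink, hp⟩ := ih e.2 heA
      (W := fun ξ => W ξ * Real.exp (l * h ξ e)) fun ξ => mul_nonneg (hW ξ) (Real.exp_pos _).le
    refine ⟨e.2 :: p, w, hchain.cons_cons heA, by simpa using hlast, hsink, ?_⟩
    have hstep := le_of_mul_le_mul_left hle (hx e heA)
    simp only [pathCost_cons_cons, mul_add, Real.exp_add, ← mul_assoc]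
    linarith

/-- The unit cost on the arcs whose tail is light, i.e. has outflow below `θ`. -/
noncomputable def lightCost (A : Finset (V × V)) (x : V × V → ℝ) (θ : ℝ) (e : V × V) : ℝ :=
  if outflow A x e.1 < θ then 1 else 0

/-- The cost `c` restricted to the arcs whose tail is heavy, i.e. has outflow at least `θ`. -/
noncomputable def heavyCost (A : Finset (V × V)) (x : V × V → ℝ) (θ : ℝ) (c : V × V → ℝ)
    (e : V × V) : ℝ :=
  if outflow A x e.1 < θ then 0 else c e

lemma lightCost_nonneg (A : Finset (V × V)) (x : V × V → ℝ) (θ : ℝ) (e : V × V) :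
    0 ≤ lightCost A x θ e := by
  unfold lightCost
  split_ifs <;> norm_num

lemma heavyCost_mem_Icc (A : Finset (V × V)) (x : V × V → ℝ) (θ : ℝ) {c : V × V → ℝ}
    {e : V × V} (hc : c e ∈ Set.Icc 0 1) : heavyCost A x θ c e ∈ Set.Icc 0 1 := by
  unfold heavyCost
  split_ifs
  exacts [⟨le_rfl, zero_le_one⟩, hc]

lemma le_heavyCost_add_lightCost (A : Finset (V × V)) (x : V × V → ℝ) (θ : ℝ) {c : V × V → ℝ}
    {e : V × V} (hc : c e ≤ 1) : c e ≤ heavyCost A x θ c e + lightCost A x θ e := by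
  unfold heavyCost lightCost
  split_ifs
  exacts [hc.trans_eq (zero_add 1).symm, (add_zero _).ge]

lemma sum_mul_lightCost_le [Fintype V] (A : Finset (V × V)) (x : V × V → ℝ) {θ : ℝ}
    (hθ : 0 ≤ θ) : ∑ e ∈ A, x e * lightCost A x θ e ≤ Fintype.card V * θ := by
  calc ∑ e ∈ A, x e * lightCost A x θ e
      = ∑ v, outflow A x v * if outflow A x v < θ then 1 else 0 :=
        (sum_outflow_mul A x fun v => if outflow A x v < θ then 1 else 0).symm
    _ ≤ ∑ _v : V, θ := by
        gcongr with v
        split_ifs with hv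
        exacts [(mul_one _).trans_le hv.le, (mul_zero _).trans_le hθ]
    _ = Fintype.card V * θ := by rw [sum_const, card_univ, nsmul_eq_mul]

lemma sum_meanCost_heavyCost_le [Fintype V] (hx : ∀ e ∈ A, 0 < x e) {c : V × V → ℝ}
    (hc : ∀ e ∈ A, 0 ≤ c e) {θ : ℝ} (hθ : 0 < θ) :
    ∑ v, meanCost A x (heavyCost A x θ c) v ≤ (∑ e ∈ A, c e * x e) / θ := by
  rw [sum_meanCost, sum_div]
  refine sum_le_sum fun e he => ?_
  have hce := mul_nonneg (hc e he) (hx e he).le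
  unfold heavyCost
  split_ifs with hv
  · rw [mul_zero, zero_div]
    positivity
  · rw [mul_comm (x e)]
    gcongr
    exact not_lt.1 hv

lemma le_log_div_of_sum_exp_le {U : Type*} [Fintype U] {a : U → ℝ} {l D : ℝ} (hl : 0 < l)
    (hD : ∑ ξ, Real.exp (l * a ξ) ≤ D) (ξ : U) : a ξ ≤ Real.log D / l := by
  have hexp : Real.exp (l * a ξ) ≤ D :=
    (single_le_sum (f := fun ξ => Real.exp (l * a ξ)) (fun ξ _ => (Real.exp_pos _).le)
      (mem_univ ξ)).trans hD
  rw [le_div_iff₀' hl]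
  exact (Real.le_log_iff_exp_le ((Real.exp_pos _).trans_le hexp)).2 hexp

lemma one_lt_log_of_three_le {K : ℝ} (hK : 3 ≤ K) : 1 < Real.log K :=
  (Real.lt_log_iff_exp_lt (by linarith)).2 (Real.exp_one_lt_three.trans_le hK)

lemma chernoff_bound_le {K n lhat : ℝ} (hK : 3 ≤ K) (hlhat : 0 < lhat) (hle : lhat ≤ n) :
    (Real.log (2 * K) + (Real.exp (Real.log (Real.log K)) - 1) * (n / lhat)) /
        Real.log (Real.log K) + 2 * lhat ≤
      3 * (n * Real.log K / (lhat * Real.log (Real.log K)) + lhat) := by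
  have hlog := one_lt_log_of_three_le hK
  have hloglog := Real.log_pos hlog
  have hratio : 1 ≤ n / lhat := (one_le_div hlhat).2 hle
  have hlog₂ : Real.log 2 ≤ Real.log K := Real.log_le_log two_pos (by linarith)
  have hnum : Real.log 2 + Real.log K + (Real.log K - 1) * (n / lhat) ≤
      3 * (n / lhat * Real.log K) := by nlinarith
  calc _ = (Real.log 2 + Real.log K + (Real.log K - 1) * (n / lhat)) / Real.log (Real.log K) +
        2 * lhat := by
        rw [Real.log_mul two_ne_zero (by linarith), Real.exp_log (by linarith)]
    _ ≤ 3 * (n / lhat * Real.log K) / Real.log (Real.log K) + 3 * lhat := by gcongr; norm_num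
    _ = 3 * (n * Real.log K / (lhat * Real.log (Real.log K)) + lhat) := by field_simp

namespace IsUnitFlow

lemma exists_path_le_of_mean_le [Fintype V] {U : Type*} [Fintype U] [Nonempty U]
    (hflow : IsUnitFlow A x s t) (hx : ∀ e ∈ A, 0 < x e) (hA : IsAcyclic A) (hst : s ≠ t)
    {g : V × V → ℝ} (hg : ∀ e ∈ A, 0 ≤ g e) {μ : ℝ} (hμ : 0 < μ) (hgμ : ∑ e ∈ A, x e * g e ≤ μ)
    {h : U → V × V → ℝ} (hh : ∀ ξ, ∀ e ∈ A, h ξ e ∈ Set.Icc 0 1)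
    {M : ℝ} (hhM : ∀ ξ, ∑ v, meanCost A x (h ξ) v ≤ M) {l : ℝ} (hl : 0 < l) :
    ∃ p : List V, p.IsChain (Arc A) ∧ p.head? = some s ∧ p.getLast? = some t ∧
      pathCost g p ≤ 2 * μ ∧
      ∀ ξ, pathCost (h ξ) p ≤
        (Real.log (2 * Fintype.card U) + (Real.exp l - 1) * M) / l := by
  obtain ⟨N, hN₀, hN⟩ := exists_expectedCost hA hx g
  have hNs : N s ≤ μ := by
    have hNt : N t = 0 := hN₀ t (outflow_eq_zero (hflow.fst_ne_sink hx hA))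
    rwa [← hflow.eq_sum_of_expectedCost hx hA hst hN, hNt, sub_zero] at hgμ
  choose G hG₁ hG_le hG using fun ξ => hA.exists_exp_potential hx (hh ξ) hl.le
  set D := Fintype.card U * Real.exp ((Real.exp l - 1) * M) with hD
  have hK : (0 : ℝ) < Fintype.card U := Nat.cast_pos.2 Fintype.card_pos
  have hD₀ : 0 < D := by positivity
  have hGs : ∑ ξ, G ξ s ≤ D := by
    have hl' : 0 ≤ Real.exp l - 1 := sub_nonneg.2 (Real.one_le_exp hl.le)
    calc ∑ ξ, G ξ s ≤ ∑ _ξ : U, Real.exp ((Real.exp l - 1) * M) := by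
          gcongr with ξ
          exact (hG_le ξ s).trans (by gcongr; exact hhM ξ)
      _ = D := by rw [sum_const, card_univ, nsmul_eq_mul]
  -- The common weight `μ / D` makes each of the two estimates at `s` at most `μ`.
  obtain ⟨p, w, hchain, hlast, hsink, hp⟩ := exists_walk_potential_le hA hx hN₀ hN hG₁ hG s
    (W := fun _ => μ / D) fun _ => by positivity
  obtain rfl := hflow.eq_sink_of_isChain hx hchain hlast hsink
  have htotal : μ / D * ∑ ξ, Real.exp (l * pathCost (h ξ) (s :: p)) + pathCost g (s :: p) ≤
      2 * μ := by
    have hGs' : μ / D * ∑ ξ, G ξ s ≤ μ := by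
      calc μ / D * ∑ ξ, G ξ s ≤ μ / D * D := by gcongr
        _ = μ := div_mul_cancel₀ μ hD₀.ne'
    rw [← mul_sum, ← mul_sum] at hp
    linarith
  refine ⟨s :: p, hchain, rfl, hlast, ?_, fun ξ => ?_⟩
  · have : 0 ≤ μ / D * ∑ ξ, Real.exp (l * pathCost (h ξ) (s :: p)) := by positivity
    linarith
  · have hexp : ∑ ξ, Real.exp (l * pathCost (h ξ) (s :: p)) ≤ 2 * D := by
      refine le_of_mul_le_mul_left ?_ (div_pos hμ hD₀)
      rw [mul_left_comm, div_mul_cancel₀ μ hD₀.ne']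
      linarith [pathCost_nonneg hchain hg]
    calc pathCost (h ξ) (s :: p) ≤ Real.log (2 * D) / l := le_log_div_of_sum_exp_le hl hexp ξ
      _ = _ := by
        rw [hD, ← mul_assoc, Real.log_mul (by positivity) (Real.exp_pos _).ne', Real.log_exp]

theorem exists_path_cost_le [Fintype V] {U : Type*} [Fintype U] [Nonempty U]
    (hflow : IsUnitFlow A x s t) (hx : ∀ e ∈ A, 0 < x e) (hA : IsAcyclic A) (hst : s ≠ t)
    {c : U → V × V → ℝ} (hc : ∀ ξ, ∀ e ∈ A, c ξ e ∈ Set.Icc 0 1)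
    (hcost : ∀ ξ, ∑ e ∈ A, c ξ e * x e ≤ 1) {l : ℝ} (hl : 0 < l) {lhat : ℝ} (hlhat : 0 < lhat) :
    ∃ p : List V, p.IsChain (Arc A) ∧ p.head? = some s ∧ p.getLast? = some t ∧
      ∀ ξ, pathCost (c ξ) p ≤ (Real.log (2 * Fintype.card U) +
        (Real.exp l - 1) * (Fintype.card V / lhat)) / l + 2 * lhat := by
  have hn : (0 : ℝ) < Fintype.card V := Nat.cast_pos.2 (Fintype.card_pos_iff.2 ⟨s⟩)
  set θ := lhat / Fintype.card V
  have hθ₀ : 0 < θ := div_pos hlhat hn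
  have hlight : ∑ e ∈ A, x e * lightCost A x θ e ≤ lhat :=
    (sum_mul_lightCost_le A x hθ₀.le).trans_eq (mul_div_cancel₀ _ hn.ne')
  have hheavy (ξ : U) : ∑ v, meanCost A x (heavyCost A x θ (c ξ)) v ≤ Fintype.card V / lhat := by
    calc _ ≤ (∑ e ∈ A, c ξ e * x e) / θ :=
          sum_meanCost_heavyCost_le hx (fun e he => (hc ξ e he).1) hθ₀
      _ ≤ 1 / θ := by gcongr; exact hcost ξ
      _ = Fintype.card V / lhat := one_div_div _ _
  obtain ⟨p, hp, hps, hpt, hp_light, hp_heavy⟩ := hflow.exists_path_le_of_mean_le hx hA hst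
    (fun e _ => lightCost_nonneg A x θ e) hlhat hlight
    (fun ξ e he => heavyCost_mem_Icc A x θ (hc ξ e he)) hheavy hl
  refine ⟨p, hp, hps, hpt, fun ξ => ?_⟩
  have hsplit := pathCost_le_pathCost_add_pathCost hp fun e he =>
    le_heavyCost_add_lightCost A x θ (hc ξ e he).2
  linarith [hp_heavy ξ]

theorem exists_path_cost_le_three_mul [Fintype V] {U : Type*} [Fintype U]
    (hflow : IsUnitFlow A x s t) (hx : ∀ e ∈ A, 0 < x e) (hA : IsAcyclic A) (hst : s ≠ t)
    {c : U → V × V → ℝ} (hc : ∀ ξ, ∀ e ∈ A, c ξ e ∈ Set.Icc 0 1)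
    (hcost : ∀ ξ, ∑ e ∈ A, c ξ e * x e ≤ 1) (hU : 3 ≤ Fintype.card U)
    {lhat : ℝ} (hlhat : 0 < lhat) :
    ∃ p : List V, p.IsChain (Arc A) ∧ p.head? = some s ∧ p.getLast? = some t ∧
      ∀ ξ, pathCost (c ξ) p ≤ 3 * (Fintype.card V * Real.log (Fintype.card U) /
        (lhat * Real.log (Real.log (Fintype.card U))) + lhat) := by
  have hK : (3 : ℝ) ≤ Fintype.card U := by exact_mod_cast hU
  have hlog := one_lt_log_of_three_le hK
  have hloglog := Real.log_pos hlog
  have : Nonempty U := Fintype.card_pos_iff.1 (by lia)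
  obtain ⟨p, hp, hps, hpt, hcp⟩ := hflow.exists_path_cost_le hx hA hst hc hcost hloglog hlhat
  refine ⟨p, hp, hps, hpt, fun ξ => ?_⟩
  rcases le_or_gt lhat (Fintype.card V) with hle | hlt
  · exact (hcp ξ).trans (chernoff_bound_le hK hlhat hle)
  · have hcard := pathCost_le_card hp (hA.nodup_of_isChain hp) fun e he => (hc ξ e he).2
    have : 0 ≤ Fintype.card V * Real.log (Fintype.card U) /
        (lhat * Real.log (Real.log (Fintype.card U))) := by positivity
    linarith

end IsUnitFlow

end Flow

theorem stmt4_general {V : Type} [Fintype V] [DecidableEq V] {U : Type*} [Fintype U]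
    {A : Finset (V × V)} {x : V × V → ℝ} {s t : V} (hflow : IsUnitFlow A x s t) (hst : s ≠ t)
    (hx : ∀ e ∈ A, 0 ≤ x e)
    (hacyclic : ∀ p : List V, p ≠ [] → ¬ ∀ e ∈ p.zip (p.rotate 1), e ∈ A ∧ 0 < x e)
    {c : U → V × V → ℝ} (hc : ∀ ξ, ∀ e ∈ A, 0 ≤ c ξ e) {L : ℝ} (hL : 0 < L)
    (hcost : ∀ ξ, ∑ e ∈ A, c ξ e * x e ≤ L) (hcL : ∀ ξ, ∀ e ∈ A, 0 < x e → c ξ e ≤ L)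
    (hU : 3 ≤ Fintype.card U) {lhat : ℝ} (hlhat : 0 < lhat) :
    ∃ p : List V, IsDipath A s t p ∧ (∀ e ∈ p.zip p.tail, 0 < x e) ∧
      ∀ ξ, pathCost (c ξ) p ≤ 3 * (Fintype.card V * Real.log (Fintype.card U) /
        (lhat * Real.log (Real.log (Fintype.card U))) + lhat) * L := by
  let S : Finset (V × V) := {e ∈ A | 0 < x e}
  have hSA {e : V × V} (he : e ∈ S) : e ∈ A := (mem_filter.1 he).1
  have hSx (e : V × V) (he : e ∈ S) : 0 < x e := (mem_filter.1 he).2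
  have hS : IsAcyclic S := isAcyclic_of_no_directed_cycle <| by simpa only [S, mem_filter]
  have hcS (ξ : U) (e : V × V) (he : e ∈ S) : c ξ e / L ∈ Set.Icc (0 : ℝ) 1 :=
    ⟨div_nonneg (hc ξ e (hSA he)) hL.le, (div_le_one hL).2 (hcL ξ e (hSA he) (hSx e he))⟩
  have hcostS (ξ : U) : ∑ e ∈ S, c ξ e / L * x e ≤ 1 := by
    simp only [div_mul_eq_mul_div, ← sum_div]
    refine (div_le_one hL).2 <| (sum_le_sum_of_subset_of_nonneg (filter_subset _ _) ?_).trans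
      (hcost ξ)
    exact fun e he _ => mul_nonneg (hc ξ e he) (hx e he)
  obtain ⟨p, hp, hps, hpt, hcp⟩ :=
    (hflow.filter_pos hx).exists_path_cost_le_three_mul hSx hS hst hcS hcostS hU hlhat
  refine ⟨p, ⟨hS.nodup_of_isChain hp, hps, hpt, hp.imp fun _ _ => hSA⟩,
    fun e he => hSx e (mem_of_mem_zip_tail hp e he), fun ξ => ?_⟩
  rw [← div_le_iff₀ hL, ← pathCost_div]
  exact hcp ξ

/-- Guarantee of the round-based path-building algorithm, parametrized by the
prescribed path length `l̂`: from an acyclically supported fractional unit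
`s`–`t` flow of max scenario cost `≤ L` (support arc costs `≤ L`), one obtains a
directed `s`–`t` path supported on positive-flow arcs of max scenario cost
`≤ C·(n·ln K/(l̂·ln ln K) + l̂)·L`. A directed cycle is a nonempty list `p` of
vertices all of whose cyclically consecutive pairs (encoded by
`p.zip (p.rotate 1)`) are arcs. -/
theorem stmt4 :
    ∃ C : ℝ, 0 < C ∧
      ∀ (V : Type) [Fintype V] [DecidableEq V]
        (A : Finset (V × V)) (s t : V) (K : ℕ)
        (c : Fin K → V × V → ℝ) (x : V × V → ℝ) (L : ℝ),
        2 ≤ Fintype.card V → s ≠ t → 3 ≤ K →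
        (∀ ξ, ∀ e ∈ A, 0 ≤ c ξ e) →
        (∀ e, 0 ≤ x e ∧ x e ≤ 1) →
        (∑ e ∈ A.filter (fun e => e.1 = s), x e) = 1 →
        (∑ e ∈ A.filter (fun e => e.2 = t), x e) = 1 →
        (∀ v, v ≠ s → v ≠ t →
          (∑ e ∈ A.filter (fun e => e.1 = v), x e) =
            ∑ e ∈ A.filter (fun e => e.2 = v), x e) →
        (∀ p : List V, p ≠ [] →
          ¬ (∀ e ∈ p.zip (p.rotate 1), e ∈ A ∧ 0 < x e)) →
        0 < L →
        (∀ ξ, ∑ e ∈ A, c ξ e * x e ≤ L) →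
        (∀ ξ, ∀ e ∈ A, 0 < x e → c ξ e ≤ L) →
        ∀ lhat : ℝ, 1 ≤ lhat →
          ∃ p : List V, IsDipath A s t p ∧
            (∀ e ∈ p.zip p.tail, 0 < x e) ∧
            ∀ ξ, ((p.zip p.tail).map (fun e => c ξ e)).sum ≤
              C * (((Fintype.card V : ℝ) * Real.log K) /
                (lhat * Real.log (Real.log K)) + lhat) * L := by
  refine ⟨3, three_pos, ?_⟩
  intro V _ _ A s t K c x L _ hst hK hc hx hs ht hcons hacyclic hL hcost hcL lhat hlhat
  simpa only [Fintype.card_fin, pathCost] using stmt4_general ⟨hs, ht, hcons⟩ hst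
    (fun e _ => (hx e).1) hacyclic hc hL hcost hcL (hK.trans_eq (Fintype.card_fin K).symm)
    (zero_lt_one.trans_le hlhat)
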